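/- Let Ω ⊆ ℝ^n be a bounded open set with Lebesgue measure and let W : Ω × ℝ^d → [0, ∞) be a Carathéodory integrand: measurable in x for each λ and continuous in λ for a.e. x. Let v_j : Ω → ℝ^d be measurable functions and ν = (ν_x)_{x∈Ω} a measurable family of Borel probability measures on ℝ^d such that for every bounded continuous φ : ℝ^d → ℝ, the functions x ↦ φ(v_j(x)) converge weakly in L¹(Ω) to x ↦ ∫_{ℝ^d} φ(λ) dν_x(λ). Then liminf_{j→∞} ∫_Ω W(x, v_j(x)) dx ≥ ∫_Ω ∫_{ℝ^d} W(x, λ) dν_x(λ) dx. -/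

import Mathlib

/-!
The integrand is approximated from below by finite sums `∑ aᵢ(x) ρᵢ(λ)`, with `aᵢ` bounded
measurable and `ρᵢ` bounded continuous, for which the weak convergence hypothesis passes to the
limit term by term.

For a radius `r > 0` and a truncation level `N`, let `(qᵢ)` be a dense sequence in the target space
and `(ρᵢ)` a continuous partition of unity with `ρᵢ` supported in the ball `B(qᵢ, 2r)`. Let `aᵢ(x)`
be the minimum of `N` and of the infimum of `W(x, ·)` over the points of the dense sequence in that
ball. For `x` with `W(x, ·)` continuous, the partial sums are at most `W(x, λ)` (`approx_le`), and
they exceed `W(x, λ) - ε` once `r` is small, `N` is large and enough terms are taken (`le_approx`).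
The energy of each partial sum under `ν` is therefore at most the liminf of the energies of `v j`
(`lintegral_approx_le`), and two applications of Fatou's lemma (`lintegral_liminf_le_of_forall`)
give the claim for `W`.
-/

open MeasureTheory Filter Topology ProbabilityTheory

section Approximation

variable {X E : Type*} [MetricSpace E] [TopologicalSpace.SeparableSpace E] [Nonempty E]

/-- A continuous cutoff around the `i`-th point of the dense sequence: `1` on the closed ball of
radius `r`, `0` outside the open ball of radius `2 * r`. -/
noncomputable def cutoff (E : Type*) [MetricSpace E] [TopologicalSpace.SeparableSpace E]
    [Nonempty E] (r : ℝ) (i : ℕ) (y : E) : ℝ :=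
  max 0 (min 1 (2 - dist y (TopologicalSpace.denseSeq E i) / r))

/-- The partition of unity obtained from the cutoffs `bᵢ` as `ρᵢ = bᵢ ∏_{k < i} (1 - bₖ)`. -/
noncomputable def bump (E : Type*) [MetricSpace E] [TopologicalSpace.SeparableSpace E]
    [Nonempty E] (r : ℝ) (i : ℕ) (y : E) : ℝ :=
  cutoff E r i y * ∏ k ∈ Finset.range i, (1 - cutoff E r k y)

/-- The infimum of `W x` over the points of the dense sequence within `2 * r` of the `i`-th one,
truncated at `N`. Only countably many points enter, so that it is measurable in `x`. -/
noncomputable def localInf (W : X → E → ℝ) (r N : ℝ) (i : ℕ) (x : X) : ℝ :=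
  ⨅ k : ℕ, if dist (TopologicalSpace.denseSeq E k) (TopologicalSpace.denseSeq E i) < 2 * r
    then min N (W x (TopologicalSpace.denseSeq E k)) else N

/-- The `K`-th partial sum of the approximation of `W` from below at scale `r` and level `N`. -/
noncomputable def approx (W : X → E → ℝ) (r N : ℝ) (K : ℕ) (x : X) (y : E) : ℝ :=
  ∑ i ∈ Finset.range K, localInf W r N i x * bump E r i y

lemma cutoff_nonneg (r : ℝ) (i : ℕ) (y : E) : 0 ≤ cutoff E r i y := le_max_left _ _

lemma cutoff_le_one (r : ℝ) (i : ℕ) (y : E) : cutoff E r i y ≤ 1 :=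
  max_le zero_le_one (min_le_left _ _)

lemma continuous_cutoff (r : ℝ) (i : ℕ) : Continuous (cutoff E r i) := by
  unfold cutoff
  fun_prop

lemma continuous_bump (r : ℝ) (i : ℕ) : Continuous (bump E r i) := by
  unfold bump
  exact (continuous_cutoff r i).mul
    (continuous_finsetProd _ fun k _ => continuous_const.sub (continuous_cutoff r k))

lemma bump_nonneg (r : ℝ) (i : ℕ) (y : E) : 0 ≤ bump E r i y :=
  mul_nonneg (cutoff_nonneg r i y)
    (Finset.prod_nonneg fun k _ => sub_nonneg.2 (cutoff_le_one r k y))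

lemma bump_le_one (r : ℝ) (i : ℕ) (y : E) : bump E r i y ≤ 1 :=
  mul_le_one₀ (cutoff_le_one r i y)
    (Finset.prod_nonneg fun k _ => sub_nonneg.2 (cutoff_le_one r k y))
    (Finset.prod_le_one (fun k _ => sub_nonneg.2 (cutoff_le_one r k y))
      fun k _ => sub_le_self _ (cutoff_nonneg r k y))

lemma sum_bump (r : ℝ) (K : ℕ) (y : E) :
    ∑ i ∈ Finset.range K, bump E r i y = 1 - ∏ k ∈ Finset.range K, (1 - cutoff E r k y) := by
  induction K with
  | zero => simp
  | succ K ih =>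
    rw [Finset.sum_range_succ, ih, Finset.prod_range_succ, bump]
    ring

lemma sum_bump_le_one (r : ℝ) (K : ℕ) (y : E) : ∑ i ∈ Finset.range K, bump E r i y ≤ 1 := by
  rw [sum_bump]
  exact sub_le_self _ (Finset.prod_nonneg fun k _ => sub_nonneg.2 (cutoff_le_one r k y))

/-- The partial sums of the partition of unity are eventually equal to `1`: some point `qᵢ` of the
dense sequence lies within `r` of `y`, and the factor `1 - bᵢ(y)` then vanishes. -/
lemma eventually_sum_bump {r : ℝ} (hr : 0 < r) (y : E) :
    ∀ᶠ K in atTop, ∑ i ∈ Finset.range K, bump E r i y = 1 := by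
  obtain ⟨i, hi⟩ := (TopologicalSpace.denseRange_denseSeq E).exists_dist_lt y hr
  filter_upwards [eventually_gt_atTop i] with K hK
  rw [sum_bump, Finset.prod_eq_zero (Finset.mem_range.2 hK), sub_zero]
  have h1 : dist y (TopologicalSpace.denseSeq E i) / r ≤ 1 := (div_le_one hr).2 hi.le
  rw [cutoff, min_eq_left (by linarith), max_eq_right zero_le_one, sub_self]

lemma bump_eq_zero {r : ℝ} (hr : 0 < r) {i : ℕ} {y : E}
    (h : 2 * r ≤ dist y (TopologicalSpace.denseSeq E i)) : bump E r i y = 0 := by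
  have h1 : 2 ≤ dist y (TopologicalSpace.denseSeq E i) / r := (le_div_iff₀ hr).2 h
  rw [bump, cutoff, max_eq_left ((min_le_right _ _).trans (by linarith)), zero_mul]

variable {W : X → E → ℝ}

lemma localInf_term_nonneg (hW : ∀ x y, 0 ≤ W x y) {N : ℝ} (hN : 0 ≤ N) (r : ℝ) (i : ℕ) (x : X) (k : ℕ) :
    0 ≤ if dist (TopologicalSpace.denseSeq E k) (TopologicalSpace.denseSeq E i) < 2 * r
      then min N (W x (TopologicalSpace.denseSeq E k)) else N := by
  split_ifs
  · exact le_min hN (hW _ _)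
  · exact hN

lemma localInf_nonneg (hW : ∀ x y, 0 ≤ W x y) {N : ℝ} (hN : 0 ≤ N) (r : ℝ) (i : ℕ) (x : X) : 0 ≤ localInf W r N i x :=
  le_ciInf (localInf_term_nonneg hW hN r i x)

lemma localInf_le_term (hW : ∀ x y, 0 ≤ W x y) {N : ℝ} (hN : 0 ≤ N) (r : ℝ) (i : ℕ) (x : X) (k : ℕ) :
    localInf W r N i x ≤
      if dist (TopologicalSpace.denseSeq E k) (TopologicalSpace.denseSeq E i) < 2 * r
      then min N (W x (TopologicalSpace.denseSeq E k)) else N :=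
  ciInf_le ⟨0, by rintro _ ⟨k, rfl⟩; exact localInf_term_nonneg hW hN r i x k⟩ k

lemma localInf_le (hW : ∀ x y, 0 ≤ W x y) {N : ℝ} (hN : 0 ≤ N) (r : ℝ) (i : ℕ) (x : X) : localInf W r N i x ≤ N := by
  refine (localInf_le_term hW hN r i x 0).trans ?_
  split_ifs
  · exact min_le_left _ _
  · exact le_rfl

/-- By continuity of `W x`, the infimum over the dense sequence bounds `W x` on the whole ball. -/
lemma localInf_le_of_dist_lt (hW : ∀ x y, 0 ≤ W x y) {N : ℝ} (hN : 0 ≤ N) {r : ℝ} {i : ℕ} {x : X} (hx : Continuous (W x))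
    {y : E} (hy : dist y (TopologicalSpace.denseSeq E i) < 2 * r) :
    localInf W r N i x ≤ W x y := by
  by_contra! hlt
  have hopen : IsOpen ({z | W x z < localInf W r N i x} ∩
      Metric.ball (TopologicalSpace.denseSeq E i) (2 * r)) :=
    (isOpen_lt hx continuous_const).inter Metric.isOpen_ball
  obtain ⟨k, hk, hk'⟩ :=
    (TopologicalSpace.denseRange_denseSeq E).exists_mem_open hopen ⟨y, hlt, hy⟩
  have h := localInf_le_term hW hN r i x k
  rw [if_pos (Metric.mem_ball.1 hk')] at h
  exact absurd (h.trans (min_le_right _ _)) (not_le.2 hk)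

lemma measurable_localInf [MeasurableSpace X] (hm : ∀ y, Measurable fun x => W x y)
    (r N : ℝ) (i : ℕ) : Measurable (localInf W r N i) := by
  unfold localInf
  refine Measurable.iInf fun k => ?_
  split_ifs
  · exact measurable_const.min (hm _)
  · exact measurable_const

lemma approx_nonneg (hW : ∀ x y, 0 ≤ W x y) {N : ℝ} (hN : 0 ≤ N) (r : ℝ) (K : ℕ) (x : X) (y : E) :
    0 ≤ approx W r N K x y :=
  Finset.sum_nonneg fun i _ => mul_nonneg (localInf_nonneg hW hN r i x) (bump_nonneg r i y)

lemma approx_le (hW : ∀ x y, 0 ≤ W x y) {N : ℝ} (hN : 0 ≤ N) {r : ℝ} (hr : 0 < r) (K : ℕ) {x : X}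
    (hx : Continuous (W x)) (y : E) : approx W r N K x y ≤ W x y := by
  calc approx W r N K x y ≤ ∑ i ∈ Finset.range K, W x y * bump E r i y := by
        refine Finset.sum_le_sum fun i _ => ?_
        rcases lt_or_ge (dist y (TopologicalSpace.denseSeq E i)) (2 * r) with h | h
        · exact mul_le_mul_of_nonneg_right (localInf_le_of_dist_lt hW hN hx h) (bump_nonneg r i y)
        · simp [bump_eq_zero hr h]
    _ = W x y * ∑ i ∈ Finset.range K, bump E r i y := by rw [Finset.mul_sum]
    _ ≤ W x y := mul_le_of_le_one_right (hW x y) (sum_bump_le_one r K y)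

/-- If `c` is a lower bound for `W x` on the ball `B(y, 4r)`, then it is one for every coefficient
whose `ρᵢ` does not vanish at `y`, hence eventually for the partial sums at `y`. -/
lemma le_approx {N c r : ℝ} (hr : 0 < r) (hc : c ≤ N) {x : X} {y : E}
    (h : ∀ z, dist z y < 4 * r → c ≤ W x z) : ∀ᶠ K in atTop, c ≤ approx W r N K x y := by
  filter_upwards [eventually_sum_bump hr y] with K hK
  calc c = ∑ i ∈ Finset.range K, c * bump E r i y := by rw [← Finset.mul_sum, hK, mul_one]
    _ ≤ approx W r N K x y := by
        refine Finset.sum_le_sum fun i _ => ?_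
        rcases lt_or_ge (dist y (TopologicalSpace.denseSeq E i)) (2 * r) with h' | h'
        · refine mul_le_mul_of_nonneg_right (le_ciInf fun k => ?_) (bump_nonneg r i y)
          split_ifs with hk
          · refine le_min hc (h _ ?_)
            have := dist_triangle_right (TopologicalSpace.denseSeq E k) y
              (TopologicalSpace.denseSeq E i)
            linarith
          · exact hc
        · simp [bump_eq_zero hr h']

/-- As `r = 1/(m+1) → 0` and `N = m → ∞`, the approximations recover `W x` from below. -/
lemma ofReal_le_liminf_approx {x : X} (hx : Continuous (W x)) (y : E) :
    ENNReal.ofReal (W x y) ≤ liminf (fun m : ℕ => liminf (fun K : ℕ =>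
      ENNReal.ofReal (approx W (1 / ((m : ℝ) + 1)) m K x y)) atTop) atTop := by
  have key : ∀ c < W x y, ENNReal.ofReal c ≤ liminf (fun m : ℕ => liminf (fun K : ℕ =>
      ENNReal.ofReal (approx W (1 / ((m : ℝ) + 1)) m K x y)) atTop) atTop := by
    intro c hc
    obtain ⟨δ, hδ, hball⟩ := Metric.eventually_nhds_iff.1
      (hx.continuousAt.eventually (lt_mem_nhds hc))
    refine le_liminf_of_le (by isBoundedDefault) ?_
    have h0 : ∀ᶠ m : ℕ in atTop, 1 / ((m : ℝ) + 1) < δ / 4 :=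
      tendsto_one_div_add_atTop_nhds_zero_nat.eventually (gt_mem_nhds (by positivity))
    filter_upwards [h0, tendsto_natCast_atTop_atTop.eventually_ge_atTop c] with m hm hcm
    refine le_liminf_of_le (by isBoundedDefault) ?_
    filter_upwards [le_approx (W := W) (x := x) (y := y) (Nat.one_div_pos_of_nat (n := m)) hcm
      fun z hz => (hball (by linarith)).le] with K hK
    exact ENNReal.ofReal_le_ofReal hK
  have ht : Tendsto ENNReal.ofReal (𝓝[<] (W x y)) (𝓝 (ENNReal.ofReal (W x y))) :=
    (ENNReal.continuous_ofReal.tendsto _).mono_left nhdsWithin_le_nhds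
  exact le_of_tendsto ht (eventually_nhdsWithin_of_forall key)

lemma measurable_approx [MeasurableSpace X] [MeasurableSpace E] [BorelSpace E]
    (hm : ∀ y, Measurable fun x => W x y) (r N : ℝ) (K : ℕ) :
    Measurable fun p : X × E => approx W r N K p.1 p.2 := by
  unfold approx
  exact Finset.measurable_sum _ fun i _ =>
    ((measurable_localInf hm r N i).comp measurable_fst).mul
      ((continuous_bump r i).measurable.comp measurable_snd)

end Approximation

section Energy

variable {X E : Type*} [MeasurableSpace X] [MeasurableSpace E]

/-- Fatou's lemma for iterated integrals against a kernel. -/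
lemma lintegral_liminf_le_of_forall (μ : Measure X) (ν : Kernel X E) [IsMarkovKernel ν]
    {F : ℕ → X → E → ENNReal} (hF : ∀ k, Measurable fun p : X × E => F k p.1 p.2) {L : ENNReal}
    (hL : ∀ k, ∫⁻ x, ∫⁻ y, F k x y ∂(ν x) ∂μ ≤ L) :
    ∫⁻ x, ∫⁻ y, liminf (fun k => F k x y) atTop ∂(ν x) ∂μ ≤ L := by
  calc ∫⁻ x, ∫⁻ y, liminf (fun k => F k x y) atTop ∂(ν x) ∂μ
      ≤ ∫⁻ x, liminf (fun k => ∫⁻ y, F k x y ∂(ν x)) atTop ∂μ :=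
        lintegral_mono fun x => lintegral_liminf_le fun k => (hF k).comp measurable_prodMk_left
    _ ≤ liminf (fun k => ∫⁻ x, ∫⁻ y, F k x y ∂(ν x) ∂μ) atTop :=
        lintegral_liminf_le fun k => (hF k).lintegral_kernel_prod_right
    _ ≤ liminf (fun _ : ℕ => L) atTop := liminf_le_liminf (Eventually.of_forall hL)
    _ = L := liminf_const L

variable [MetricSpace E] [TopologicalSpace.SeparableSpace E] [Nonempty E] [BorelSpace E]

/-- The energy inequality for a single approximation: its energies converge along `v` by weak
convergence of each summand, and it lies below `W`. -/
lemma lintegral_approx_le (μ : Measure X) [IsFiniteMeasure μ] {W : X → E → ℝ}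
    (hW : ∀ x y, 0 ≤ W x y) (hm : ∀ y, Measurable fun x => W x y)
    (hc : ∀ᵐ x ∂μ, Continuous (W x)) {v : ℕ → X → E} (hv : ∀ j, Measurable (v j))
    (ν : Kernel X E) [IsMarkovKernel ν]
    (hgen : ∀ φ : BoundedContinuousFunction E ℝ,
      ∀ g : X → ℝ, Measurable g → (∃ C : ℝ, ∀ x, |g x| ≤ C) →
      Tendsto (fun j => ∫ x, g x * φ (v j x) ∂μ) atTop
        (𝓝 (∫ x, g x * ∫ y, φ y ∂(ν x) ∂μ)))
    {r N : ℝ} (hr : 0 < r) (hN : 0 ≤ N) (K : ℕ) :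
    ∫⁻ x, ∫⁻ y, ENNReal.ofReal (approx W r N K x y) ∂(ν x) ∂μ ≤
      liminf (fun j => ∫⁻ x, ENNReal.ofReal (W x (v j x)) ∂μ) atTop := by
  have ha : ∀ i x, |localInf W r N i x| ≤ N := fun i x => by
    rw [abs_of_nonneg (localInf_nonneg hW hN r i x)]
    exact localInf_le hW hN r i x
  have hb : ∀ i (y : E), ‖bump E r i y‖ ≤ 1 := fun i y => by
    rw [Real.norm_of_nonneg (bump_nonneg r i y)]
    exact bump_le_one r i y
  have hbint : ∀ i x, Integrable (bump E r i) (ν x) := fun i x =>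
    Integrable.of_bound (continuous_bump r i).measurable.aestronglyMeasurable 1
      (Eventually.of_forall (hb i))
  -- the product of a coefficient with a measurable function bounded by `1` is integrable
  have hint : ∀ i (f : X → ℝ), Measurable f → (∀ x, ‖f x‖ ≤ 1) →
      Integrable (fun x => localInf W r N i x * f x) μ := fun i f hf hf1 =>
    Integrable.of_bound ((measurable_localInf hm r N i).mul hf).aestronglyMeasurable (N * 1)
      (Eventually.of_forall fun x => by
        rw [norm_mul]
        exact mul_le_mul (ha i x) (hf1 x) (norm_nonneg _) hN)
  have hνm : ∀ i, Measurable fun x => ∫ y, bump E r i y ∂(ν x) := fun i =>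
    ((continuous_bump (E := E) r i).measurable.stronglyMeasurable.integral_kernel).measurable
  have hνb : ∀ i x, ‖∫ y, bump E r i y ∂(ν x)‖ ≤ 1 := fun i x => by
    simpa using norm_integral_le_of_norm_le_const (μ := ν x) (Eventually.of_forall (hb i))
  have hinner : ∀ x, ∫⁻ y, ENNReal.ofReal (approx W r N K x y) ∂(ν x) =
      ENNReal.ofReal (∑ i ∈ Finset.range K, localInf W r N i x * ∫ y, bump E r i y ∂(ν x)) := by
    intro x
    have hnn := approx_nonneg hW hN r K x
    unfold approx at hnn ⊢
    rw [← ofReal_integral_eq_lintegral_ofReal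
      (integrable_finsetSum _ fun i _ => (hbint i x).const_mul _) (Eventually.of_forall hnn),
      integral_finsetSum _ fun i _ => (hbint i x).const_mul _]
    simp_rw [integral_const_mul]
  have hlim : ∫⁻ x, ∫⁻ y, ENNReal.ofReal (approx W r N K x y) ∂(ν x) ∂μ =
      ENNReal.ofReal (∑ i ∈ Finset.range K,
        ∫ x, localInf W r N i x * ∫ y, bump E r i y ∂(ν x) ∂μ) := by
    simp_rw [hinner]
    rw [← integral_finsetSum _ fun i _ => hint i _ (hνm i) (hνb i),
      ofReal_integral_eq_lintegral_ofReal
        (integrable_finsetSum _ fun i _ => hint i _ (hνm i) (hνb i))]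
    exact Eventually.of_forall fun x => Finset.sum_nonneg fun i _ =>
      mul_nonneg (localInf_nonneg hW hN r i x) (integral_nonneg (bump_nonneg r i))
  have hseq : ∀ j, ENNReal.ofReal (∑ i ∈ Finset.range K,
        ∫ x, localInf W r N i x * bump E r i (v j x) ∂μ) ≤
      ∫⁻ x, ENNReal.ofReal (W x (v j x)) ∂μ := by
    intro j
    have hij := fun i => hint i (fun x => bump E r i (v j x))
      ((continuous_bump (E := E) r i).measurable.comp (hv j))
      fun x => hb i (v j x)
    rw [← integral_finsetSum _ fun i _ => hij i, ofReal_integral_eq_lintegral_ofReal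
      (integrable_finsetSum _ fun i _ => hij i)
      (Eventually.of_forall fun x => approx_nonneg hW hN r K x (v j x))]
    refine lintegral_mono_ae ?_
    filter_upwards [hc] with x hx
    exact ENNReal.ofReal_le_ofReal (approx_le hW hN hr K hx (v j x))
  have htend : Tendsto (fun j => ENNReal.ofReal (∑ i ∈ Finset.range K,
      ∫ x, localInf W r N i x * bump E r i (v j x) ∂μ)) atTop
      (𝓝 (ENNReal.ofReal (∑ i ∈ Finset.range K,
        ∫ x, localInf W r N i x * ∫ y, bump E r i y ∂(ν x) ∂μ))) := by
    refine (ENNReal.continuous_ofReal.tendsto _).comp (tendsto_finsetSum _ fun i _ => ?_)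
    exact hgen (BoundedContinuousFunction.ofNormedAddCommGroup (bump E r i)
      (continuous_bump r i) 1 (hb i)) _ (measurable_localInf hm r N i) ⟨N, ha i⟩
  rw [hlim, ← htend.liminf_eq]
  exact liminf_le_liminf (Eventually.of_forall hseq)

end Energy

/-- **Lower semicontinuity of the energy along a Young-measure generating sequence.**
For a nonnegative Carathéodory integrand `W` (measurable in `x`, continuous in `λ` for
a.e. `x ∈ Ω`), if `φ ∘ v j ⇀ x ↦ ∫ φ dν_x` weakly in `L¹(Ω)` for every bounded
continuous `φ`, then `liminf_j ∫_Ω W(x, v j x) dx ≥ ∫_Ω ∫ W(x, λ) dν_x(λ) dx`.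
(The nonnegative energies are computed as lower integrals in `ℝ≥0∞`.) -/
theorem stmt_2 {n d : ℕ} (Ω : Set (EuclideanSpace ℝ (Fin n)))
    (hΩopen : IsOpen Ω) (hΩbdd : Bornology.IsBounded Ω)
    (W : EuclideanSpace ℝ (Fin n) → EuclideanSpace ℝ (Fin d) → ℝ)
    (hWnonneg : ∀ x lam, 0 ≤ W x lam)
    (hWmeas : ∀ lam, Measurable (fun x => W x lam))
    (hWcont : ∀ᵐ x ∂(volume.restrict Ω), Continuous (W x))
    (v : ℕ → EuclideanSpace ℝ (Fin n) → EuclideanSpace ℝ (Fin d))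
    (hvmeas : ∀ j, Measurable (v j))
    (ν : ProbabilityTheory.Kernel (EuclideanSpace ℝ (Fin n)) (EuclideanSpace ℝ (Fin d)))
    (hν : ProbabilityTheory.IsMarkovKernel ν)
    (hgen : ∀ φ : BoundedContinuousFunction (EuclideanSpace ℝ (Fin d)) ℝ,
      ∀ g : EuclideanSpace ℝ (Fin n) → ℝ, Measurable g → (∃ C : ℝ, ∀ x, |g x| ≤ C) →
      Tendsto (fun j => ∫ x in Ω, g x * φ (v j x)) atTop
        (𝓝 (∫ x in Ω, g x * ∫ lam, φ lam ∂(ν x)))) :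
    (∫⁻ x in Ω, ∫⁻ lam, ENNReal.ofReal (W x lam) ∂(ν x)) ≤
      Filter.liminf (fun j => ∫⁻ x in Ω, ENNReal.ofReal (W x (v j x))) atTop := by
  have : IsFiniteMeasure (volume.restrict Ω) :=
    isFiniteMeasure_restrict.2 hΩbdd.measure_lt_top.ne
  calc (∫⁻ x in Ω, ∫⁻ lam, ENNReal.ofReal (W x lam) ∂(ν x))
      ≤ ∫⁻ x in Ω, ∫⁻ lam, liminf (fun m : ℕ => liminf (fun K : ℕ =>
          ENNReal.ofReal (approx W (1 / ((m : ℝ) + 1)) m K x lam)) atTop) atTop ∂(ν x) := by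
        refine lintegral_mono_ae ?_
        filter_upwards [hWcont] with x hx
        exact lintegral_mono fun lam => ofReal_le_liminf_approx hx lam
    _ ≤ _ := by
        have hmeas := fun (m K : ℕ) =>
          (measurable_approx hWmeas (1 / ((m : ℝ) + 1)) m K).ennreal_ofReal
        refine lintegral_liminf_le_of_forall _ ν (F := fun m x lam => liminf (fun K : ℕ =>
          ENNReal.ofReal (approx W (1 / ((m : ℝ) + 1)) m K x lam)) atTop)
          (fun m => Measurable.liminf (hmeas m)) fun m => ?_
        refine lintegral_liminf_le_of_forall _ ν (F := fun K x lam =>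
          ENNReal.ofReal (approx W (1 / ((m : ℝ) + 1)) m K x lam)) (hmeas m) fun K => ?_
        exact lintegral_approx_le _ hWnonneg hWmeas hWcont hvmeas ν hgen
          Nat.one_div_pos_of_nat (Nat.cast_nonneg m) K
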